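/- arXiv:2009.09260 — 2 statements merged into one kernel-verified Lean document; each statement's English description precedes it below -/
import Mathlib

section
/- Let X be a topological space and (f_t)_{t∈ℝ} a continuous flow on X that is topologically transitive. Then for every pair of nonempty open sets U, V ⊆ X, the set I(U,V) = { τ > 0 : f_{kτ}(U) ∩ V ≠ ∅ for some positive integer k } is open and dense in (0,∞). -/
/-!
Since `f_T` has dense range, `f_T⁻¹(V)` is a nonempty open set, so transitivity sends `U` into it at
some positive time `t`, and then `U` meets `V` at time `T + t`. Hence `U` hits `V` at arbitrarily
large times. On the other hand, for `0 < a < b` the intervals `(ka, kb)`, `k = 1, 2, …`, eventually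
overlap and cover a neighbourhood of `+∞`, so some large hitting time is of the form `kσ` with
`σ ∈ (a, b)`. Openness holds because the orbit maps `t ↦ f_t(x)` are continuous.
-/

open Filter Set Topology

section HittingTimes

variable {M X : Type*} {f : M → X → X} {U V : Set X}

/-- The set `N(U, V)` of times at which the image of `U` under `f` meets `V`. All of `M` is allowed,
so for a flow over `ℝ` nonpositive times count as well. -/
def hittingTimes (f : M → X → X) (U V : Set X) : Set M :=
  {t | (f t '' U ∩ V).Nonempty}

/-- Topological transitivity in positive time: every nonempty open set hits every nonempty open
set, itself included, at some time `t > 0`. -/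
def IsPositivelyTransitive [Zero M] [LT M] [TopologicalSpace X] (f : M → X → X) : Prop :=
  ∀ U V : Set X, IsOpen U → IsOpen V → U.Nonempty → V.Nonempty →
    ∃ t, 0 < t ∧ t ∈ hittingTimes f U V

theorem hittingTimes_eq_biUnion (f : M → X → X) (U V : Set X) :
    hittingTimes f U V = ⋃ x ∈ U, (f · x) ⁻¹' V := by
  ext t
  simp [hittingTimes, Set.Nonempty]

variable [TopologicalSpace X]

theorem isOpen_hittingTimes [TopologicalSpace M] (horbit : ∀ x, Continuous (f · x))
    (hV : IsOpen V) : IsOpen (hittingTimes f U V) := by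
  rw [hittingTimes_eq_biUnion]
  exact isOpen_biUnion fun x _ => hV.preimage (horbit x)

theorem IsPositivelyTransitive.frequently_mem_hittingTimes
    [AddZeroClass M] [Preorder M] [IsDirectedOrder M] [AddLeftMono M]
    (htrans : IsPositivelyTransitive f) (hcont : ∀ t, Continuous (f t))
    (hrange : ∀ t, DenseRange (f t)) (hadd : ∀ s t x, f (s + t) x = f s (f t x))
    (hU : IsOpen U) (hV : IsOpen V) (hUne : U.Nonempty) (hVne : V.Nonempty) :
    ∃ᶠ t in atTop, t ∈ hittingTimes f U V := by
  refine frequently_atTop.2 fun T => ?_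
  have hpre : (f T ⁻¹' V).Nonempty := (hrange T).exists_mem_open hV hVne
  obtain ⟨t, ht, _, ⟨x, hx, rfl⟩, hxV⟩ := htrans U _ hU (hV.preimage (hcont T)) hUne hpre
  exact ⟨T + t, le_add_of_nonneg_right ht.le, _, ⟨x, hx, rfl⟩, by rwa [hadd]⟩

end HittingTimes

section Submultiples

/-- The positive `τ` having a multiple `kτ`, with `k` a positive integer, in `S`; applied to the
hitting times `N(U, V)` this is `I(U, V)`. -/
def positiveSubmultiples {R : Type*} [Semiring R] [LT R] (S : Set R) : Set R :=
  {τ | 0 < τ ∧ ∃ k : ℕ, 0 < k ∧ (k : R) * τ ∈ S}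

theorem isOpen_positiveSubmultiples {R : Type*} [Semiring R] [LinearOrder R] [TopologicalSpace R]
    [ClosedIicTopology R] [ContinuousMul R] {S : Set R} (hS : IsOpen S) :
    IsOpen (positiveSubmultiples S) := by
  simp only [positiveSubmultiples, ofPred_and, ofPred_exists]
  exact isOpen_Ioi.inter <| isOpen_iUnion fun k =>
    isOpen_const.inter <| hS.preimage (continuous_const_mul (k : R))

variable {𝕜 : Type*} [Semifield 𝕜] [LinearOrder 𝕜] [IsStrictOrderedRing 𝕜] [ExistsAddOfLE 𝕜]
  [FloorSemiring 𝕜]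

theorem eventually_exists_nat_mul_lt_lt_mul {a b : 𝕜} (ha : 0 < a) (hab : a < b) :
    ∀ᶠ t in atTop, ∃ k : ℕ, (k : 𝕜) * a < t ∧ t < k * b := by
  obtain ⟨c, hc, rfl⟩ := exists_pos_add_of_lt' hab
  have hb : 0 < a + c := ha.trans hab
  filter_upwards [eventually_ge_atTop 0, eventually_gt_atTop (a * (a + c) / c)] with t ht₀ ht
  refine ⟨⌊t / (a + c)⌋₊ + 1, ?_, ?_⟩
  · have hfloor : (⌊t / (a + c)⌋₊ : 𝕜) * (a + c) ≤ t :=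
      (le_div_iff₀ hb).1 (Nat.floor_le (by positivity))
    have hlarge : a * (a + c) < t * c := (div_lt_iff₀ hc).1 ht
    push_cast
    refine lt_of_mul_lt_mul_right ?_ hb.le
    calc ((⌊t / (a + c)⌋₊ : 𝕜) + 1) * a * (a + c)
        = ⌊t / (a + c)⌋₊ * (a + c) * a + a * (a + c) := by ring
      _ < t * a + t * c := add_lt_add_of_le_of_lt (by gcongr) hlarge
      _ = t * (a + c) := by ring
  · exact_mod_cast (div_lt_iff₀ hb).1 (Nat.lt_floor_add_one (t / (a + c)))

theorem Ioi_zero_subset_closure_positiveSubmultiples [TopologicalSpace 𝕜] [OrderTopology 𝕜]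
    {S : Set 𝕜} (hS : ∃ᶠ t in atTop, t ∈ S) :
    Ioi 0 ⊆ closure (positiveSubmultiples S) := by
  intro a (ha : 0 < a)
  suffices ∃ᶠ τ in 𝓝[>] a, τ ∈ positiveSubmultiples S from
    mem_closure_iff_frequently.2 (this.filter_mono nhdsWithin_le_nhds)
  refine (nhdsGT_basis a).frequently_iff.2 fun b hab => ?_
  obtain ⟨t, htS, k, hat, htb⟩ :=
    (hS.and_eventually (eventually_exists_nat_mul_lt_lt_mul ha hab)).exists
  have hk : 0 < k := Nat.pos_of_ne_zero fun hk₀ => by simpa [hk₀] using hat.trans htb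
  have hk' : (0 : 𝕜) < k := Nat.cast_pos.2 hk
  have haτ : a < t / k := (lt_div_iff₀' hk').2 hat
  have hτb : t / k < b := (div_lt_iff₀' hk').2 htb
  refine ⟨t / k, ⟨haτ, hτb⟩, ha.trans haτ, k, hk, ?_⟩
  rwa [mul_div_cancel₀ _ hk'.ne']

end Submultiples

/-- Time ranges over a semifield so that `𝕜 = ℝ≥0` covers semiflows. -/
theorem stmt2_general {𝕜 X : Type*} [Semifield 𝕜] [LinearOrder 𝕜] [IsStrictOrderedRing 𝕜]
    [ExistsAddOfLE 𝕜] [FloorSemiring 𝕜] [TopologicalSpace 𝕜] [OrderTopology 𝕜] [ContinuousMul 𝕜]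
    [TopologicalSpace X] {f : 𝕜 → X → X}
    (horbit : ∀ x, Continuous (f · x)) (hcont : ∀ t, Continuous (f t))
    (hrange : ∀ t, DenseRange (f t)) (hadd : ∀ s t x, f (s + t) x = f s (f t x))
    (htrans : IsPositivelyTransitive f) {U V : Set X}
    (hU : IsOpen U) (hV : IsOpen V) (hUne : U.Nonempty) (hVne : V.Nonempty) :
    IsOpen (positiveSubmultiples (hittingTimes f U V)) ∧
      Ioi 0 ⊆ closure (positiveSubmultiples (hittingTimes f U V)) :=
  ⟨isOpen_positiveSubmultiples (isOpen_hittingTimes horbit hV),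
    Ioi_zero_subset_closure_positiveSubmultiples
      (htrans.frequently_mem_hittingTimes hcont hrange hadd hU hV hUne hVne)⟩

/-- For a topologically transitive continuous flow on a topological space and nonempty open
sets `U`, `V`, the set `I(U,V) = {τ > 0 : f_{kτ}(U) ∩ V ≠ ∅ for some k ≥ 1}` is open and
dense in `(0,∞)`. -/
theorem stmt2 {X : Type*} [TopologicalSpace X]
    (f : ℝ → X → X)
    (hcont : Continuous fun p : ℝ × X => f p.1 p.2)
    (hf0 : ∀ x, f 0 x = x)
    (hfadd : ∀ s t x, f (s + t) x = f s (f t x))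
    (htrans : ∀ U V : Set X, IsOpen U → IsOpen V → U.Nonempty → V.Nonempty →
      ∃ t : ℝ, 0 < t ∧ (f t '' U ∩ V).Nonempty)
    (U V : Set X) (hU : IsOpen U) (hV : IsOpen V) (hUne : U.Nonempty) (hVne : V.Nonempty) :
    IsOpen {τ : ℝ | 0 < τ ∧ ∃ k : ℕ, 0 < k ∧ (f ((k : ℝ) * τ) '' U ∩ V).Nonempty} ∧
    Set.Ioi (0:ℝ) ⊆
      closure {τ : ℝ | 0 < τ ∧ ∃ k : ℕ, 0 < k ∧ (f ((k : ℝ) * τ) '' U ∩ V).Nonempty} := by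
  have hsurj (t : ℝ) : (f t).Surjective := fun x => ⟨f (-t) x, by rw [← hfadd, add_neg_cancel, hf0]⟩
  exact stmt2_general (fun x => hcont.comp (.prodMk_left x)) (fun t => hcont.comp (.prodMk_right t))
    (fun t => (hsurj t).denseRange) hfadd htrans hU hV hUne hVne
end

section
/- Let (f_t)_{t∈ℝ} be a continuous flow on a compact metric space (X,d), φ : X → ℝ a continuous function, α ∈ ℝ, and Φ(y,t) = ∫_0^t φ(f_s y) ds. For r > 0 define the continuous-time Carathéodory set function m^F_r(Z) = sup_{T>0} inf { Σ_{(y,t)∈E} e^{Φ(y,t) − tα} : E ⊆ X × [T,∞) finite or countable, Z ⊆ ⋃_{(y,t)∈E} B_t(y,r) }, where B_t(y,r) is the flow Bowen ball; for τ > 0 define the discrete-time set function m^{τ,r}(Z) = sup_{N∈ℕ} inf { Σ_{(y,n)∈E} e^{Φ(y,nτ) − nτα} : E ⊆ X × {n ∈ ℕ : n ≥ N} finite or countable, Z ⊆ ⋃_{(y,n)∈E} B_n^{f_τ}(y,r) }, where B_n^{f_τ}(y,r) is the Bowen ball of the time-τ map. Then for every τ > 0, r > 0, and Z ⊆ X,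 m^{τ,r}(Z) ≤ e^{τ(‖φ‖_∞ + |α|)} · m^F_r(Z), where ‖φ‖_∞ = sup_{x∈X} |φ(x)|. -/
open scoped ENNReal

noncomputable section

/-- The Bowen ball of a flow: points whose orbit stays `r`-close to that of `y` for all
times in `[0,t]`. -/
def flowBowen {X : Type*} [MetricSpace X] (f : ℝ → X → X) (r : ℝ) (y : X) (t : ℝ) :
    Set X :=
  {z | ∀ s ∈ Set.Icc (0:ℝ) t, dist (f s y) (f s z) < r}

/-- The Bowen ball of a map: points whose first `n` iterates stay `r`-close to those
of `y`. -/
def mapBowen {X : Type*} (g : X → X) [MetricSpace X] (r : ℝ) (y : X) (n : ℕ) : Set X :=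
  {z | ∀ k < n, dist (g^[k] y) (g^[k] z) < r}

/-- The Birkhoff integral `Φ(y,t) = ∫_0^t φ(f_s y) ds` of `φ` along the flow `f`. -/
def birkhoff {X : Type*} (f : ℝ → X → X) (φ : X → ℝ) (y : X) (t : ℝ) : ℝ :=
  ∫ s in (0:ℝ)..t, φ (f s y)

/-- The continuous-time Carathéodory set function defined via flow Bowen balls of radius
`r` with weights `e^{Φ(y,t) − tα}`. -/
def mFlow {X : Type*} [MetricSpace X] (f : ℝ → X → X) (φ : X → ℝ) (α r : ℝ)
    (Z : Set X) : ℝ≥0∞ :=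
  ⨆ (T : ℝ) (_ : 0 < T),
    ⨅ (E : Set (X × ℝ)) (_ : E.Countable) (_ : ∀ p ∈ E, T ≤ p.2)
      (_ : Z ⊆ ⋃ p ∈ E, flowBowen f r p.1 p.2),
      ∑' p : E, ENNReal.ofReal (Real.exp (birkhoff f φ p.1.1 p.1.2 - p.1.2 * α))

/-- The discrete-time Carathéodory set function defined via Bowen balls of the time-`τ`
map with radius `ρ` and weights `e^{Φ(y,nτ) − nτα}`. -/
def mMap {X : Type*} [MetricSpace X] (f : ℝ → X → X) (φ : X → ℝ) (α τ ρ : ℝ)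
    (Z : Set X) : ℝ≥0∞ :=
  ⨆ N : ℕ,
    ⨅ (E : Set (X × ℕ)) (_ : E.Countable) (_ : ∀ p ∈ E, N ≤ p.2)
      (_ : Z ⊆ ⋃ p ∈ E, mapBowen (f τ) ρ p.1 p.2),
      ∑' p : E, ENNReal.ofReal
        (Real.exp (birkhoff f φ p.1.1 ((p.1.2 : ℝ) * τ) - (p.1.2 : ℝ) * τ * α))

end

/-!
Round the order `t` of each flow Bowen ball in a cover down to a multiple `n * τ` of `τ`. Sampling
the flow at multiples of `τ` tests fewer times, so the ball of order `n` of the time-`τ` map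
contains the flow ball of order `t`, and the rounded balls still cover. Since
`Φ(y,t) - t * α = ∫_0^t (φ(f_s y) - α) ds`, discarding the last piece of length at most `τ` raises
the exponent by at most `τ * K` whenever `α - K ≤ φ` with `0 ≤ K`; one may take
`K = ‖φ‖_∞ + |α|`.
-/

section Covers

open Set

variable {X ι κ : Type*}

/-- The Carathéodory outer cost of `Z` at a fixed level: the least total weight of a countable
cover of `Z` by the sets `B i` with `i ∈ S`. The index set `S` encodes the constraint on the order
of the balls, so that `mFlow` and `mMap` are suprema of such costs. -/
noncomputable def coverCost (S : Set ι) (B : ι → Set X) (w : ι → ℝ≥0∞) (Z : Set X) : ℝ≥0∞ :=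
  ⨅ (E : Set ι) (_ : E.Countable) (_ : ∀ i ∈ E, i ∈ S) (_ : Z ⊆ ⋃ i ∈ E, B i), ∑' i : E, w i

theorem coverCost_le_tsum {S E : Set ι} {B : ι → Set X} {w : ι → ℝ≥0∞} {Z : Set X}
    (hE : E.Countable) (hES : ∀ i ∈ E, i ∈ S) (hZ : Z ⊆ ⋃ i ∈ E, B i) :
    coverCost S B w Z ≤ ∑' i : E, w i :=
  iInf₂_le_of_le E hE (iInf₂_le_of_le hES hZ le_rfl)

theorem tsum_image_le_tsum_comp (g : ι → κ) (E : Set ι) (w : κ → ℝ≥0∞) :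
    ∑' k : g '' E, w k ≤ ∑' i : E, w (g i) :=
  ENNReal.tsum_le_tsum_comp_of_surjective (f := imageFactorization g E)
    imageFactorization_surjective fun k => w k

theorem coverCost_le_mul_coverCost {S : Set ι} {S' : Set κ} {B : ι → Set X} {B' : κ → Set X}
    {w : ι → ℝ≥0∞} {w' : κ → ℝ≥0∞} {C : ℝ≥0∞} (hC₀ : C ≠ 0) (hC : C ≠ ∞) (g : ι → κ)
    (hS : MapsTo g S S') (hB : ∀ i ∈ S, B i ⊆ B' (g i)) (hw : ∀ i ∈ S, w' (g i) ≤ C * w i)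
    (Z : Set X) : coverCost S' B' w' Z ≤ C * coverCost S B w Z := by
  rw [coverCost.eq_def S]
  simp_rw [ENNReal.mul_iInf_of_ne hC₀ hC, ← ENNReal.tsum_mul_left]
  refine le_iInf₂ fun E hE => le_iInf₂ fun hES hZ => ?_
  have hcover : Z ⊆ ⋃ k ∈ g '' E, B' k := by
    rw [biUnion_image]
    exact hZ.trans (iUnion₂_mono fun i hi => hB i (hES i hi))
  calc coverCost S' B' w' Z
      ≤ ∑' k : g '' E, w' k :=
        coverCost_le_tsum (hE.image g) (forall_mem_image.2 fun i hi => hS (hES i hi)) hcover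
    _ ≤ ∑' i : E, w' (g i) := tsum_image_le_tsum_comp g E w'
    _ ≤ ∑' i : E, C * w i := ENNReal.tsum_le_tsum fun i => hw i (hES i i.2)

end Covers

section Floor

variable {k : Type*} [Field k] [LinearOrder k] [IsStrictOrderedRing k] [FloorSemiring k] {a b : k}

theorem natFloor_div_mul_le (ha : 0 ≤ a) (hb : 0 < b) : ⌊a / b⌋₊ * b ≤ a :=
  (le_div_iff₀ hb).1 (Nat.floor_le (div_nonneg ha hb.le))

theorem sub_natFloor_div_mul_lt (a : k) (hb : 0 < b) : a - ⌊a / b⌋₊ * b < b := by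
  have h : a < (⌊a / b⌋₊ + 1) * b := (div_lt_iff₀ hb).1 (Nat.lt_floor_add_one _)
  linarith

end Floor

section Semiflow

variable {X : Type*} {f : ℝ → X → X} {τ t : ℝ}

theorem iterate_semiflow (hf0 : ∀ x, f 0 x = x)
    (hfadd : ∀ s t, 0 ≤ s → 0 ≤ t → ∀ x, f (s + t) x = f s (f t x)) (hτ : 0 ≤ τ) (n : ℕ) (x : X) :
    (f τ)^[n] x = f (n * τ) x := by
  induction n with
  | zero => simp [hf0]
  | succ n ih =>
    rw [Function.iterate_succ_apply', ih, ← hfadd τ (n * τ) hτ (by positivity)]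
    congr 1
    push_cast
    ring

theorem flowBowen_subset_mapBowen [MetricSpace X] (hf0 : ∀ x, f 0 x = x)
    (hfadd : ∀ s t, 0 ≤ s → 0 ≤ t → ∀ x, f (s + t) x = f s (f t x)) (hτ : 0 ≤ τ) {n : ℕ}
    (hn : n * τ ≤ t) (r : ℝ) (y : X) : flowBowen f r y t ⊆ mapBowen (f τ) r y n := by
  intro z hz k hk
  rw [iterate_semiflow hf0 hfadd hτ, iterate_semiflow hf0 hfadd hτ]
  have hkn : (k : ℝ) * τ ≤ n * τ := by gcongr
  exact hz _ ⟨by positivity, hkn.trans hn⟩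

variable {φ : X → ℝ} {y : X}

theorem mul_sub_le_birkhoff_sub_birkhoff {m u : ℝ} (hm : ∀ x, m ≤ φ x) (hut : u ≤ t)
    (hu : IntervalIntegrable (fun s => φ (f s y)) MeasureTheory.volume 0 u)
    (ht : IntervalIntegrable (fun s => φ (f s y)) MeasureTheory.volume 0 t) :
    m * (t - u) ≤ birkhoff f φ y t - birkhoff f φ y u :=
  calc m * (t - u) = ∫ _ in u..t, m := by
        rw [intervalIntegral.integral_const, smul_eq_mul, mul_comm]
    _ ≤ ∫ s in u..t, φ (f s y) :=
        intervalIntegral.integral_mono hut intervalIntegrable_const (hu.symm.trans ht)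
          fun s => hm (f s y)
    _ = birkhoff f φ y t - birkhoff f φ y u :=
        (intervalIntegral.integral_interval_sub_left ht hu).symm

theorem birkhoff_natFloor_sub_le {α K : ℝ} (hK : 0 ≤ K) (hφ : ∀ x, α - K ≤ φ x)
    (hint : ∀ t, 0 ≤ t → IntervalIntegrable (fun s => φ (f s y)) MeasureTheory.volume 0 t)
    (hτ : 0 < τ) (ht : 0 ≤ t) :
    birkhoff f φ y (⌊t / τ⌋₊ * τ) - ⌊t / τ⌋₊ * τ * α ≤ τ * K + (birkhoff f φ y t - t * α) := by
  have hut : ⌊t / τ⌋₊ * τ ≤ t := natFloor_div_mul_le ht hτ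
  have hlost : (t - ⌊t / τ⌋₊ * τ) * K ≤ τ * K :=
    mul_le_mul_of_nonneg_right (sub_natFloor_div_mul_lt t hτ).le hK
  have hbirk := mul_sub_le_birkhoff_sub_birkhoff hφ hut (hint _ (by positivity)) (hint t ht)
  linarith

end Semiflow

section Caratheodory

variable {X : Type*} [MetricSpace X] (f : ℝ → X → X) (φ : X → ℝ) (α : ℝ)

theorem mFlow_eq_iSup_coverCost (r : ℝ) (Z : Set X) :
    mFlow f φ α r Z = ⨆ (T : ℝ) (_ : 0 < T),
      coverCost {p : X × ℝ | T ≤ p.2} (fun p => flowBowen f r p.1 p.2)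
        (fun p => ENNReal.ofReal (Real.exp (birkhoff f φ p.1 p.2 - p.2 * α))) Z :=
  rfl

theorem mMap_eq_iSup_coverCost (τ r : ℝ) (Z : Set X) :
    mMap f φ α τ r Z = ⨆ N : ℕ,
      coverCost {q : X × ℕ | N ≤ q.2} (fun q => mapBowen (f τ) r q.1 q.2)
        (fun q => ENNReal.ofReal (Real.exp (birkhoff f φ q.1 (q.2 * τ) - q.2 * τ * α))) Z :=
  rfl

end Caratheodory

theorem stmt14_general {X : Type*} [MetricSpace X] {f : ℝ → X → X} (hf0 : ∀ x, f 0 x = x)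
    (hfadd : ∀ s t, 0 ≤ s → 0 ≤ t → ∀ x, f (s + t) x = f s (f t x)) {φ : X → ℝ}
    (hint : ∀ y t, 0 ≤ t → IntervalIntegrable (fun s => φ (f s y)) MeasureTheory.volume 0 t)
    {α K τ : ℝ} (hK : 0 ≤ K) (hφ : ∀ x, α - K ≤ φ x) (hτ : 0 < τ) (r : ℝ) (Z : Set X) :
    mMap f φ α τ r Z ≤ ENNReal.ofReal (Real.exp (τ * K)) * mFlow f φ α r Z := by
  rw [mMap_eq_iSup_coverCost, mFlow_eq_iSup_coverCost]
  refine iSup_le fun N => ?_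
  -- `mFlow` only admits positive levels, hence `N + 1` rather than `N`.
  have hT : 0 < (N + 1 : ℝ) * τ := by positivity
  refine le_trans ?_ (mul_le_mul_right (le_iSup₂_of_le _ hT le_rfl) _)
  refine coverCost_le_mul_coverCost (ENNReal.ofReal_ne_zero_iff.2 (Real.exp_pos _))
    ENNReal.ofReal_ne_top (fun p => (p.1, ⌊p.2 / τ⌋₊)) ?_ ?_ ?_ Z <;>
    rintro ⟨y, t⟩ (ht : (N + 1) * τ ≤ t)
  · have hN : (N : ℝ) + 1 ≤ t / τ := (le_div_iff₀ hτ).2 ht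
    exact Nat.le_floor (by linarith)
  · exact flowBowen_subset_mapBowen hf0 hfadd hτ.le (natFloor_div_mul_le (hT.le.trans ht) hτ) r y
  · rw [← ENNReal.ofReal_mul (Real.exp_pos _).le, ← Real.exp_add]
    gcongr
    exact birkhoff_natFloor_sub_le hK hφ (hint y) hτ (hT.le.trans ht)

theorem sub_iSup_abs_add_abs_le {X : Type*} [TopologicalSpace X] [CompactSpace X] {φ : X → ℝ}
    (hφ : Continuous φ) (α : ℝ) (x : X) : α - ((⨆ x, |φ x|) + |α|) ≤ φ x := by
  have hx : |φ x| ≤ ⨆ x, |φ x| := le_ciSup (isCompact_range hφ.abs).bddAbove x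
  linarith [neg_abs_le (φ x), le_abs_self α]

/-- The discrete-time Carathéodory set function of the time-`τ` map at radius `r` is
bounded above by `e^{τ(‖φ‖_∞ + |α|)}` times the continuous-time one at the same radius. -/
theorem stmt14 {X : Type*} [MetricSpace X] [CompactSpace X]
    (f : ℝ → X → X)
    (hcont : Continuous fun p : ℝ × X => f p.1 p.2)
    (hf0 : ∀ x, f 0 x = x)
    (hfadd : ∀ s t x, f (s + t) x = f s (f t x))
    (φ : X → ℝ) (hφ : Continuous φ) (α : ℝ)
    (r τ : ℝ) (hr : 0 < r) (hτ : 0 < τ) :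
    ∀ Z : Set X, mMap f φ α τ r Z ≤
      ENNReal.ofReal (Real.exp (τ * ((⨆ x : X, |φ x|) + |α|))) * mFlow f φ α r Z := fun Z =>
  stmt14_general hf0 (fun s t _ _ => hfadd s t)
    (fun y _ _ => (hφ.comp (hcont.comp (.prodMk_left y))).intervalIntegrable _ _)
    (add_nonneg (Real.iSup_nonneg fun x => abs_nonneg (φ x)) (abs_nonneg α))
    (sub_iSup_abs_add_abs_le hφ α) hτ r Z
end
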